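/- Let k ≥ 2 and let f₁,…,f_k : {0,1} → ℝ_{≥0} be nonzero nonnegative functions. Then the sup norm of the convolution f₁∗⋯∗f_k over ℤ is at least C(k,⌊k/2⌋)·( ⌊(k+1)/2⌋·⌈(k+1)/2⌉ / (k+1)² )^(k/2) times the product of the ℓ¹ norms ∏ᵢ (fᵢ(0)+fᵢ(1)). Moreover this constant is optimal. -/

import Mathlib

/-! After normalising, `f₁∗⋯∗f_k` is the law `c` of a sum of `k` independent Bernoulli variables.
Write `c j = C(k,j) a j`. Newton's inequalities say that `a` is log-concave (`exists_logConcave`).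
Let `n` be a mode of `c`. Log-concavity together with `c (n ± 1) ≤ c n` gives a `t > 0` such that
`a j * t ^ n ≤ a n * t ^ j` for all `j`, with `p = t / (1 + t)` lying in
`[n / (k + 1), (n + 1) / (k + 1)]`. Summing over `j` shows that `c n` is at least the binomial
weight `C(k,n) p ^ n (1 - p) ^ (k - n)`, so the problem reduces to binomial laws.

This weight is log-concave in `p`, so on that interval it is at least the minimum of its two
endpoint values. Those have the form `k! / (k + 1) ^ k * h m * h (k + 1 - m)` with
`h m = m ^ m / m!`. As `h` is log-convex, the least value is at `m = ⌊(k + 1) / 2⌋`, which is the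
constant. The binomial law with `p = ⌊(k + 1) / 2⌋ / (k + 1)` has its mode at that `m`, and hence
attains the constant.

Strict positivity of the `fᵢ` is assumed when Newton's inequalities are used; the general case
follows by perturbing `fᵢ` to `fᵢ + ε`. -/


/-- The `k`-fold convolution of functions on `{0,1}` (viewed as functions on `ℤ`
supported on `{0,1}`), evaluated at `n ∈ ℤ`. -/
def conv1 (k : ℕ) (f : Fin k → Fin 2 → ℝ) (n : ℤ) : ℝ :=
  ∑ a ∈ Finset.univ.filter (fun a : Fin k → Fin 2 => ∑ i, ((a i : ℕ) : ℤ) = n),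
    ∏ i, f i (a i)

/-! ### The convolution: recursion, support and total mass -/

lemma conv1_succ (k : ℕ) (f : Fin (k + 1) → Fin 2 → ℝ) (n : ℤ) :
    conv1 (k + 1) f n = f 0 0 * conv1 k (fun i => f i.succ) n
      + f 0 1 * conv1 k (fun i => f i.succ) (n - 1) := by
  unfold conv1
  simp only [Finset.sum_filter]
  rw [← (Fin.consEquiv (fun _ : Fin (k + 1) => Fin 2)).sum_comp, Fintype.sum_prod_type,
    Fin.sum_univ_two, Finset.mul_sum, Finset.mul_sum]
  congr 1
  · refine Finset.sum_congr rfl fun a _ => ?_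
    simp [Fin.consEquiv, Fin.sum_univ_succ, Fin.prod_univ_succ]
  · refine Finset.sum_congr rfl fun a _ => ?_
    have : (1 + ∑ i, ((a i : ℕ) : ℤ) = n) ↔ (∑ i, ((a i : ℕ) : ℤ) = n - 1) := by
      constructor <;> intro h <;> linarith
    simp [Fin.consEquiv, Fin.sum_univ_succ, Fin.prod_univ_succ, this]

lemma conv1_zero (f : Fin 0 → Fin 2 → ℝ) (n : ℤ) :
    conv1 0 f n = if n = 0 then 1 else 0 := by
  unfold conv1
  rw [Finset.sum_filter]
  simp [eq_comm]

lemma conv1_neg (k : ℕ) (f : Fin k → Fin 2 → ℝ) (n : ℤ) (hn : n < 0) : conv1 k f n = 0 := by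
  unfold conv1
  rw [Finset.filter_eq_empty_iff.2, Finset.sum_empty]
  intro a _ h
  have : 0 ≤ ∑ i, ((a i : ℕ) : ℤ) := Finset.sum_nonneg fun i _ => by positivity
  omega

lemma conv1_large (k : ℕ) (f : Fin k → Fin 2 → ℝ) (n : ℤ) (hn : (k : ℤ) < n) :
    conv1 k f n = 0 := by
  unfold conv1
  rw [Finset.filter_eq_empty_iff.2, Finset.sum_empty]
  intro a _ h
  have : ∑ i, ((a i : ℕ) : ℤ) ≤ ∑ _i : Fin k, (1 : ℤ) := Finset.sum_le_sum fun i _ => by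
    have := (a i).2
    omega
  simp at this
  omega

lemma sum_conv1 (k : ℕ) (f : Fin k → Fin 2 → ℝ) :
    ∑ j ∈ Finset.range (k + 1), conv1 k f j = ∏ i, (f i 0 + f i 1) := by
  induction k with
  | zero => simp [conv1_zero]
  | succ k ih =>
    simp only [conv1_succ, Finset.sum_add_distrib, ← Finset.mul_sum]
    rw [Fin.prod_univ_succ, ← ih (fun i => f i.succ)]
    rw [Finset.sum_range_succ, conv1_large k _ ((k + 1 : ℕ) : ℤ) (by push_cast; omega)]
    rw [Finset.sum_range_succ' (fun j : ℕ => conv1 k (fun i => f i.succ) ((j : ℤ) - 1)),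
      conv1_neg k _ (((0 : ℕ) : ℤ) - 1) (by simp)]
    have : ∀ j : ℕ, ((j + 1 : ℕ) : ℤ) - 1 = j := fun j => by push_cast; ring
    simp only [this]
    ring

/-! ### Newton's inequalities -/

/-- The step of the induction for Newton's inequalities: multiplying a polynomial by `α + β X`.
Here `w, x, y, z` are consecutive normalised coefficients, and the log-concavity hypotheses carry
the factors `u - 1`, `v - 1` so that they are vacuous where an index leaves the range. -/
lemma newton_step {α β u v w x y z : ℝ} (hα : 0 ≤ α) (hβ : 0 ≤ β) (hu : 1 ≤ u) (hv : 1 ≤ v)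
    (h1 : 0 ≤ (u - 1) * (x ^ 2 - w * y)) (h2 : 0 ≤ (v - 1) * (y ^ 2 - x * z))
    (h3 : 0 ≤ (u - 1) * (v - 1) * (x * y - w * z)) :
    (α * (v + 1) * x + β * (u - 1) * w) * (α * (v - 1) * z + β * (u + 1) * y)
      ≤ (α * v * y + β * u * x) ^ 2 := by
  have e1 : 0 ≤ α ^ 2 * (v + 1) * ((v - 1) * (y ^ 2 - x * z)) := by positivity
  have e2 : 0 ≤ β ^ 2 * (u + 1) * ((u - 1) * (x ^ 2 - w * y)) := by positivity
  have e3 : 0 ≤ α * β * ((u - 1) * (v - 1) * (x * y - w * z)) := by positivity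
  nlinarith [sq_nonneg (α * y - β * x)]

/-- Newton's inequalities: the coefficients `C(k,j) a j` of `∏ i, (f i 0 + f i 1 * X)` have
log-concave normalisation `a`. -/
lemma exists_logConcave (k : ℕ) (f : Fin k → Fin 2 → ℝ) (hf : ∀ i v, 0 < f i v) :
    ∃ a : ℕ → ℝ, (∀ j ≤ k, 0 < a j) ∧ (∀ j, j + 2 ≤ k → a j * a (j + 2) ≤ a (j + 1) ^ 2) ∧
      ∀ j : ℕ, conv1 k f j = (k.choose j : ℝ) * a j := by
  induction k with
  | zero =>
    refine ⟨fun _ => 1, by simp, by simp, fun j => ?_⟩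
    rw [conv1_zero]
    cases j with
    | zero => simp
    | succ j =>
      simp
      omega
  | succ k ih =>
    obtain ⟨a, hpos, hlc, hc⟩ := ih (fun i => f i.succ) (fun i v => hf _ _)
    have hα := hf 0 0
    have hβ := hf 0 1
    set α := f 0 0
    set β := f 0 1
    refine ⟨fun j => (α * ((k : ℝ) + 1 - j) * a j + β * j * a (j - 1)) / (k + 1), ?_, ?_, ?_⟩
    · intro j hj
      refine div_pos ?_ (by positivity)
      rcases Nat.lt_or_ge j (k + 1) with h | h
      · have h1 : (j : ℝ) + 1 ≤ k + 1 := by exact_mod_cast h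
        have h2 := hpos j (by omega)
        have h3 := (hpos (j - 1) (by omega)).le
        have h4 : 0 < (k : ℝ) + 1 - j := by linarith
        positivity
      · have : j = k + 1 := by omega
        subst this
        have h3 := hpos k le_rfl
        simp
        positivity
    · intro j hj
      have hkj : (j : ℝ) + 1 ≤ k := by exact_mod_cast (by omega : j + 1 ≤ k)
      have key := newton_step (α := α) (β := β) (u := (j : ℝ) + 1) (v := (k : ℝ) - j)
        (w := a (j - 1)) (x := a j) (y := a (j + 1)) (z := a (j + 2)) hα.le hβ.le
        (by linarith [(Nat.cast_nonneg j : (0 : ℝ) ≤ j)]) (by linarith) ?_ ?_ ?_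
      · simp only [add_tsub_cancel_right, show j + 2 - 1 = j + 1 by omega]
        rw [div_mul_div_comm, div_pow, ← pow_two]
        gcongr
        refine le_trans (le_of_eq ?_) (key.trans (le_of_eq ?_))
        · push_cast
          ring
        · push_cast
          ring
      · rcases j with _ | i
        · simp
        · have := hlc i (by omega)
          simp only [add_tsub_cancel_right]
          refine mul_nonneg (by simp; positivity) (by linarith)
      · rcases Nat.lt_or_ge k (j + 2) with h | h
        · have : k = j + 1 := by omega
          subst this
          simp
        · have := hlc j h
          refine mul_nonneg (by linarith) (by linarith)
      · rcases j with _ | i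
        · simp
        rcases Nat.lt_or_ge k (i + 3) with h | h
        · have : k = i + 2 := by omega
          subst this
          apply le_of_eq
          push_cast
          ring
        have l1 := hlc i (by omega)
        have l2 := hlc (i + 1) (by omega)
        have p0 := hpos i (by omega)
        have p1 := hpos (i + 1) (by omega)
        have p2 := hpos (i + 2) (by omega)
        have p3 := hpos (i + 3) (by omega)
        simp only [add_tsub_cancel_right, add_assoc, Nat.reduceAdd] at l1 l2 ⊢
        refine mul_nonneg (mul_nonneg (by simp; positivity) (by linarith)) ?_
        have hm := mul_le_mul l1 l2 (by positivity) (by positivity)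
        have : (a i * a (i + 3)) * (a (i + 1) * a (i + 2))
            ≤ (a (i + 1) * a (i + 2)) * (a (i + 1) * a (i + 2)) := by nlinarith
        linarith [le_of_mul_le_mul_right this (by positivity)]
    · intro j
      rw [conv1_succ, hc]
      rcases j with _ | i
      · rw [conv1_neg _ _ _ (by simp)]
        simp only [Nat.choose_zero_right, Nat.cast_zero, Nat.cast_one]
        field_simp
        ring
      · have e : ((i + 1 : ℕ) : ℤ) - 1 = i := by push_cast; ring
        rw [e, hc]
        have c1 : ((k + 1).choose (i + 1) : ℝ) * (i + 1) = (k + 1) * k.choose i := by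
          exact_mod_cast (Nat.add_one_mul_choose_eq k i).symm
        have c2 : ((k + 1).choose (i + 1) : ℝ) = k.choose i + k.choose (i + 1) := by
          exact_mod_cast Nat.choose_succ_succ k i
        have c3 : ((k + 1).choose (i + 1) : ℝ) * (k - i) = (k + 1) * k.choose (i + 1) := by
          linear_combination ((k : ℝ) + 1) * c2 - c1
        simp only [add_tsub_cancel_right]
        push_cast
        field_simp
        linear_combination (-α * a (i + 1)) * c3 - (β * a i) * c1

/-! ### Comparison with a binomial law -/

lemma le_geometric {k n : ℕ} {a : ℕ → ℝ} {t : ℝ} (ht : 0 < t) (hn : n ≤ k)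
    (hpos : ∀ j ≤ k, 0 < a j) (hlc : ∀ j, j + 2 ≤ k → a j * a (j + 2) ≤ a (j + 1) ^ 2)
    (hup : n + 1 ≤ k → a (n + 1) ≤ t * a n) (hdown : ∀ m, m + 1 = n → t * a m ≤ a n) :
    ∀ j ≤ k, a j * t ^ n ≤ a n * t ^ j := by
  -- Log-concavity propagates the two hypotheses on consecutive ratios away from `n`.
  have up : ∀ d, n + d + 1 ≤ k → a (n + d + 1) ≤ t * a (n + d) := by
    intro d
    induction d with
    | zero => exact hup
    | succ d ih =>
      intro h
      have i1 := ih (by omega)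
      have p0 := hpos (n + d) (by omega)
      have p1 := hpos (n + d + 1) (by omega)
      have l := hlc (n + d) (by omega)
      have : a (n + d) * a (n + d + 2) ≤ a (n + d) * (t * a (n + d + 1)) := by nlinarith
      exact le_of_mul_le_mul_left this p0
  have down : ∀ d m, m + 1 + d = n → t * a m ≤ a (m + 1) := by
    intro d
    induction d with
    | zero =>
      intro m h
      have h' : m + 1 = n := by omega
      rw [h']
      exact hdown m h'
    | succ d ih =>
      intro m h
      have i1 := ih (m + 1) (by omega)
      have p0 := hpos (m + 1) (by omega)
      have p1 := hpos (m + 2) (by omega)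
      have l := hlc m (by omega)
      have : (t * a m) * a (m + 2) ≤ a (m + 1) * a (m + 2) := by nlinarith
      exact le_of_mul_le_mul_right this p1
  intro j hj
  rcases le_total n j with h | h
  · obtain ⟨d, rfl⟩ := Nat.exists_eq_add_of_le h
    clear h
    induction d with
    | zero => simp
    | succ d ih =>
      have i1 := ih (by omega)
      have u := up d (by omega)
      calc a (n + d + 1) * t ^ n ≤ (t * a (n + d)) * t ^ n := by gcongr
        _ = t * (a (n + d) * t ^ n) := by ring
        _ ≤ t * (a n * t ^ (n + d)) := by gcongr
        _ = a n * t ^ (n + (d + 1)) := by ring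
  · have : ∀ d m, m + d = n → a m * t ^ n ≤ a n * t ^ m := by
      intro d
      induction d with
      | zero =>
        intro m h
        simp at h
        simp [h]
      | succ d ih =>
        intro m h
        have i1 := ih (m + 1) (by omega)
        have u := down d m (by omega)
        have : t * (a m * t ^ n) ≤ t * (a n * t ^ m) := by
          calc t * (a m * t ^ n) = (t * a m) * t ^ n := by ring
            _ ≤ a (m + 1) * t ^ n := by gcongr
            _ ≤ a n * t ^ (m + 1) := i1
            _ = t * (a n * t ^ m) := by ring
        exact le_of_mul_le_mul_left this ht
    exact this (n - j) j (by omega)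

/-- The weight of the binomial law of parameters `k` and `p` at `n`. -/
noncomputable def binWeight (k n : ℕ) (p : ℝ) : ℝ := (k.choose n : ℝ) * p ^ n * (1 - p) ^ (k - n)

/-- A sequence `C(k,j) a j` with `a` log-concave and with mode `n` is, at `n`, at least its total
mass times the weight at `n` of a binomial law which also has mode `n`. -/
lemma exists_binWeight_le {k n : ℕ} (hk : 1 ≤ k) {a : ℕ → ℝ} (hn : n ≤ k)
    (hpos : ∀ j ≤ k, 0 < a j) (hlc : ∀ j, j + 2 ≤ k → a j * a (j + 2) ≤ a (j + 1) ^ 2)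
    (hmode : ∀ j ≤ k, (k.choose j : ℝ) * a j ≤ k.choose n * a n) :
    ∃ p : ℝ, (n : ℝ) / (k + 1) ≤ p ∧ p ≤ ((n : ℝ) + 1) / (k + 1) ∧
      binWeight k n p * ∑ j ∈ Finset.range (k + 1), (k.choose j : ℝ) * a j
        ≤ k.choose n * a n := by
  have pn := hpos n hn
  have hnk : (n : ℝ) ≤ k := by exact_mod_cast hn
  have hn0 : (0 : ℝ) ≤ n := Nat.cast_nonneg n
  have cpos : (0 : ℝ) < k.choose n := by exact_mod_cast Nat.choose_pos hn
  have hR : n + 1 ≤ k → a (n + 1) * (k - n) ≤ (n + 1) * a n := by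
    intro h
    have c : (k.choose (n + 1) : ℝ) * (n + 1) = k.choose n * (k - n) := by
      have := Nat.choose_succ_right_eq k n
      rw [← Nat.cast_sub hn]
      exact_mod_cast this
    have := hmode (n + 1) h
    have : (k.choose n : ℝ) * (a (n + 1) * (k - n)) ≤ k.choose n * ((n + 1) * a n) := by
      have e : (k.choose n : ℝ) * (a (n + 1) * (k - n))
          = (n + 1) * (k.choose (n + 1) * a (n + 1)) := by
        linear_combination (-a (n + 1)) * c
      rw [e]
      nlinarith
    exact le_of_mul_le_mul_left this cpos
  have hL : ∀ m, m + 1 = n → a m * n ≤ (k + 1 - n) * a n := by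
    rintro m rfl
    have c : (k.choose (m + 1) : ℝ) * (m + 1) = k.choose m * (k - m) := by
      have := Nat.choose_succ_right_eq k m
      rw [← Nat.cast_sub (by omega)]
      exact_mod_cast this
    have := hmode m (by omega)
    push_cast at hnk ⊢
    have : (k.choose (m + 1) : ℝ) * (a m * (m + 1))
        ≤ k.choose (m + 1) * ((k + 1 - (m + 1)) * a (m + 1)) := by
      have e : (k.choose (m + 1) : ℝ) * (a m * (m + 1)) = (k - m) * (k.choose m * a m) := by
        linear_combination a m * c
      rw [e]
      have : (0 : ℝ) ≤ k - m := by linarith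
      nlinarith
    exact le_of_mul_le_mul_left this cpos
  -- `t` is a point common to `[a (n + 1) / a n, a n / a (n - 1)]` and
  -- `[n / (k + 1 - n), (n + 1) / (k - n)]`.
  obtain ⟨t, ht, hup, hdown, ht1, ht2⟩ : ∃ t : ℝ, 0 < t ∧ (n + 1 ≤ k → a (n + 1) ≤ t * a n) ∧
      (∀ m, m + 1 = n → t * a m ≤ a n) ∧ (n : ℝ) ≤ t * (k + 1 - n) ∧ t * (k - n) ≤ n + 1 := by
    have hd : (0 : ℝ) < k + 1 - n := by linarith
    have hD : ∀ m, m + 1 = n → (n / (k + 1 - n) : ℝ) * a m ≤ a n := by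
      intro m hm
      rw [div_mul_eq_mul_div, div_le_iff₀ hd]
      linarith [hL m hm]
    rcases Nat.lt_or_ge n k with h | h
    · have p1 := hpos (n + 1) h
      have hkn : (n : ℝ) + 1 ≤ k := by exact_mod_cast h
      refine ⟨max (a (n + 1) / a n) (n / (k + 1 - n)), ?_, ?_, ?_, ?_, ?_⟩
      · exact lt_max_of_lt_left (by positivity)
      · intro _
        rw [← div_le_iff₀ pn]
        exact le_max_left _ _
      · intro m hm
        rw [max_mul_of_nonneg _ _ (hpos m (by omega)).le]
        refine max_le ?_ (hD m hm)
        rw [div_mul_eq_mul_div, div_le_iff₀ pn]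
        subst hm
        linarith [hlc m (by omega)]
      · rw [← div_le_iff₀ hd]
        exact le_max_right _ _
      · rw [max_mul_of_nonneg _ _ (by linarith)]
        refine max_le ?_ ?_
        · rw [div_mul_eq_mul_div, div_le_iff₀ pn]
          exact hR h
        · rw [div_mul_eq_mul_div, div_le_iff₀ hd]
          nlinarith
    · have : n = k := by omega
      subst this
      have hn1 : (1 : ℝ) ≤ n := by exact_mod_cast hk
      refine ⟨n / (n + 1 - n), div_pos (by linarith) hd, by omega, hD, ?_, ?_⟩
      · rw [div_mul_cancel₀ _ hd.ne']
      · simp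
        linarith
  have geo := le_geometric ht hn hpos hlc hup hdown
  have h1t : 0 < 1 + t := by linarith
  refine ⟨t / (1 + t), ?_, ?_, ?_⟩
  · rw [div_le_div_iff₀ (by positivity) h1t]
    linarith
  · rw [div_le_div_iff₀ h1t (by positivity)]
    linarith
  · have hs : (∑ j ∈ Finset.range (k + 1), (k.choose j : ℝ) * a j) * t ^ n
        ≤ a n * (1 + t) ^ k := by
      rw [Finset.sum_mul, add_comm 1 t, add_pow, Finset.mul_sum]
      refine Finset.sum_le_sum fun j hj => ?_
      have := geo j (by simpa [Nat.lt_succ_iff] using hj)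
      have c0 : (0 : ℝ) ≤ k.choose j := Nat.cast_nonneg _
      simp only [one_pow, mul_one]
      nlinarith
    have e : binWeight k n (t / (1 + t)) = k.choose n * t ^ n / (1 + t) ^ k := by
      have : 1 - t / (1 + t) = 1 / (1 + t) := by
        field_simp
        ring
      unfold binWeight
      rw [this, div_pow, div_pow, one_pow]
      have : (1 + t) ^ k = (1 + t) ^ n * (1 + t) ^ (k - n) := by
        rw [← pow_add, Nat.add_sub_cancel' hn]
      rw [this]
      field_simp
    rw [e, div_mul_eq_mul_div, div_le_iff₀ (by positivity)]
    calc _ = (k.choose n : ℝ) * ((∑ j ∈ Finset.range (k + 1), (k.choose j : ℝ) * a j) * t ^ n) := by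
          ring
      _ ≤ k.choose n * (a n * (1 + t) ^ k) := by gcongr
      _ = _ := by ring

/-! ### Minimising the mode of a binomial law -/

/-- The function `n ↦ n ^ n / n!`, with value `1` at `0`. -/
noncomputable def selfPowDiv (n : ℕ) : ℝ := (n : ℝ) ^ n / n.factorial

lemma selfPowDiv_pos (n : ℕ) : 0 < selfPowDiv n := by
  unfold selfPowDiv
  rcases n with _ | n
  · simp
  · positivity

/-- Log-convexity of `n ^ n / n!`: its consecutive ratios `(1 + 1 / n) ^ n` increase. -/
lemma selfPowDiv_sq (n : ℕ) : selfPowDiv (n + 1) ^ 2 ≤ selfPowDiv n * selfPowDiv (n + 2) := by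
  rcases Nat.eq_zero_or_pos n with rfl | hn
  · norm_num [selfPowDiv, Nat.factorial]
  have hx : (0 : ℝ) < n := by exact_mod_cast hn
  -- Bernoulli's inequality for `(1 - 1 / (n + 1) ^ 2) ^ (n + 1)`.
  have b := one_add_mul_le_pow (a := -(1 / ((n : ℝ) + 1) ^ 2)) (by
    have : 1 / ((n : ℝ) + 1) ^ 2 ≤ 1 := by
      rw [div_le_one (by positivity)]
      nlinarith
    linarith) (n + 1)
  have e1 : 1 + ((n + 1 : ℕ) : ℝ) * -(1 / ((n : ℝ) + 1) ^ 2) = n / (n + 1) := by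
    push_cast
    field_simp
    ring
  have e2 : 1 + -(1 / ((n : ℝ) + 1) ^ 2) = n * (n + 2) / (n + 1) ^ 2 := by
    field_simp
    ring
  rw [e1, e2, div_pow, div_le_div_iff₀ (by positivity) (by positivity), ← pow_mul,
    mul_pow] at b
  have b' : ((n : ℝ) + 1) ^ (2 * n + 1) ≤ n ^ n * (n + 2) ^ (n + 1) := by
    have : (n * (n + 1) : ℝ) * ((n : ℝ) + 1) ^ (2 * n + 1)
        ≤ (n * (n + 1)) * (n ^ n * (n + 2) ^ (n + 1)) := by
      refine le_trans (le_of_eq ?_) (b.trans (le_of_eq ?_)) <;> ring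
    exact le_of_mul_le_mul_left this (by positivity)
  unfold selfPowDiv
  simp only [Nat.factorial_succ]
  push_cast
  rw [div_pow, div_mul_div_comm, div_le_div_iff₀ (by positivity) (by positivity)]
  have : (0 : ℝ) < n.factorial := by positivity
  have q : 0 ≤ ((n : ℝ) + 1) * (n + 2) * n.factorial ^ 2 := by positivity
  have := mul_le_mul_of_nonneg_left b' (mul_nonneg q (by positivity : (0 : ℝ) ≤ n + 1))
  refine le_trans (le_of_eq ?_) (this.trans (le_of_eq ?_)) <;> ring

lemma selfPowDiv_ratio (a d : ℕ) :
    selfPowDiv (a + 1) * selfPowDiv (a + d) ≤ selfPowDiv a * selfPowDiv (a + d + 1) := by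
  induction d with
  | zero => simp [mul_comm]
  | succ d ih =>
    have p0 := selfPowDiv_pos a
    have p1 := selfPowDiv_pos (a + 1)
    have p2 := selfPowDiv_pos (a + d)
    have p3 := selfPowDiv_pos (a + d + 1)
    have s := selfPowDiv_sq (a + d)
    rw [← add_assoc]
    have h1 := mul_le_mul_of_nonneg_left s p1.le
    have h2 := mul_le_mul_of_nonneg_right ih (selfPowDiv_pos (a + d + 2)).le
    have : selfPowDiv (a + d + 1) * (selfPowDiv (a + 1) * selfPowDiv (a + d + 1))
        ≤ selfPowDiv (a + d + 1) * (selfPowDiv a * selfPowDiv (a + d + 2)) := by linarith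
    exact le_of_mul_le_mul_left this p3

lemma selfPowDiv_mid_le {N m : ℕ} (hm : m ≤ N) :
    selfPowDiv (N / 2) * selfPowDiv (N - N / 2) ≤ selfPowDiv m * selfPowDiv (N - m) := by
  have key : ∀ d m, m + d = N / 2 →
      selfPowDiv (N / 2) * selfPowDiv (N - N / 2) ≤ selfPowDiv m * selfPowDiv (N - m) := by
    intro d
    induction d with
    | zero =>
      intro m h
      simp at h
      rw [h]
    | succ d ih =>
      intro m h
      refine (ih (m + 1) (by omega)).trans ?_
      have := selfPowDiv_ratio m (N - 2 * m - 1)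
      rwa [show m + (N - 2 * m - 1) = N - (m + 1) by omega,
        show N - (m + 1) + 1 = N - m by omega] at this
  rcases le_total m (N / 2) with h | h
  · exact key (N / 2 - m) m (by omega)
  · rw [mul_comm (selfPowDiv m)]
    rcases eq_or_lt_of_le h with rfl | h
    · rw [mul_comm]
    · have := key (N / 2 - (N - m)) (N - m) (by omega)
      rwa [show N - (N - m) = m by omega] at this

lemma binWeight_left {k n : ℕ} (hn : n ≤ k) :
    binWeight k n (n / (k + 1)) =
      k.factorial / ((k : ℝ) + 1) ^ k * (selfPowDiv n * selfPowDiv (k + 1 - n)) := by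
  obtain ⟨d, rfl⟩ := Nat.exists_eq_add_of_le hn
  have e : 1 - (n : ℝ) / ((n + d : ℕ) + 1) = (d + 1) / ((n + d : ℕ) + 1) := by
    field_simp
    push_cast
    ring
  unfold binWeight selfPowDiv
  rw [e, show n + d + 1 - n = d + 1 by omega, Nat.add_sub_cancel_left, Nat.cast_add_choose,
    Nat.factorial_succ, div_pow, div_pow, pow_add]
  push_cast
  field_simp
  ring

lemma binWeight_symm {k n : ℕ} (hn : n ≤ k) (p : ℝ) :
    binWeight k n p = binWeight k (k - n) (1 - p) := by
  unfold binWeight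
  rw [Nat.choose_symm hn, Nat.sub_sub_self hn]
  ring

/-- The optimal constant, as the weight at its mode of the extremal binomial law. -/
noncomputable def optWeight (k : ℕ) : ℝ :=
  binWeight k ((k + 1) / 2) (((k + 1) / 2 : ℕ) / ((k : ℝ) + 1))

lemma optWeight_le_left {k n : ℕ} (hk : 1 ≤ k) (hn : n ≤ k) :
    optWeight k ≤ binWeight k n (n / (k + 1)) := by
  unfold optWeight
  rw [binWeight_left hn, binWeight_left (by omega)]
  exact mul_le_mul_of_nonneg_left (selfPowDiv_mid_le (by omega)) (by positivity)

lemma optWeight_le_right {k n : ℕ} (hk : 1 ≤ k) (hn : n ≤ k) :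
    optWeight k ≤ binWeight k n ((n + 1) / (k + 1)) := by
  rw [binWeight_symm hn]
  convert optWeight_le_left hk (Nat.sub_le k n) using 2
  rw [Nat.cast_sub hn]
  field_simp
  ring

lemma optWeight_nonneg (k : ℕ) : 0 ≤ optWeight k := by
  unfold optWeight binWeight
  have : (((k + 1) / 2 : ℕ) : ℝ) / ((k : ℝ) + 1) ≤ 1 := by
    rw [div_le_one (by positivity)]
    exact_mod_cast Nat.div_le_self _ _
  have : 0 ≤ 1 - (((k + 1) / 2 : ℕ) : ℝ) / ((k : ℝ) + 1) := by linarith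
  positivity

/-- Lower bounds for `p ^ n * (1 - p) ^ (k - n)` at two points of `[0, 1]` persist between them,
by log-concavity. -/
lemma binWeight_between {k n : ℕ} {M p q r : ℝ} (hM : 0 ≤ M) (hq : 0 ≤ q)
    (hqp : q ≤ p) (hpr : p ≤ r) (hr : r ≤ 1) (h1 : M ≤ binWeight k n q)
    (h2 : M ≤ binWeight k n r) : M ≤ binWeight k n p := by
  obtain ⟨u, v, hu, hv, huv, rfl⟩ : ∃ u v : ℝ, 0 ≤ u ∧ 0 ≤ v ∧ u + v = 1 ∧ u * q + v * r = p := by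
    have := (Convex.mem_Icc (hqp.trans hpr)).1 ⟨hqp, hpr⟩
    obtain ⟨u, v, a, b, c, d⟩ := this
    exact ⟨u, v, a, b, c, d⟩
  have hr0 : 0 ≤ r := by linarith
  have hq1 : 0 ≤ 1 - q := by linarith
  have hr1 : 0 ≤ 1 - r := by linarith
  have g1 := Real.geom_mean_le_arith_mean2_weighted hu hv hq hr0 huv
  have g2 := Real.geom_mean_le_arith_mean2_weighted hu hv hq1 hr1 huv
  have e2 : u * (1 - q) + v * (1 - r) = 1 - (u * q + v * r) := by linear_combination huv
  rw [e2] at g2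
  unfold binWeight at *
  set C : ℝ := (k.choose n : ℝ)
  have hC : 0 ≤ C := Nat.cast_nonneg _
  calc M = M ^ u * M ^ v := by
        rw [← Real.rpow_add_of_nonneg hM hu hv, huv, Real.rpow_one]
    _ ≤ (C * q ^ n * (1 - q) ^ (k - n)) ^ u * (C * r ^ n * (1 - r) ^ (k - n)) ^ v := by gcongr
    _ = (C ^ u * C ^ v) * (q ^ u * r ^ v) ^ n * ((1 - q) ^ u * (1 - r) ^ v) ^ (k - n) := by
        rw [Real.mul_rpow (by positivity) (by positivity), Real.mul_rpow hC (by positivity),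
          Real.mul_rpow (by positivity) (by positivity), Real.mul_rpow hC (by positivity),
          ← Real.rpow_pow_comm hq, ← Real.rpow_pow_comm hr0, ← Real.rpow_pow_comm hq1,
          ← Real.rpow_pow_comm hr1, mul_pow, mul_pow]
        ring
    _ = C * (q ^ u * r ^ v) ^ n * ((1 - q) ^ u * (1 - r) ^ v) ^ (k - n) := by
        rw [← Real.rpow_add_of_nonneg hC hu hv, huv, Real.rpow_one]
    _ ≤ _ := by gcongr

lemma optWeight_eq (k : ℕ) :
    (k.choose (k / 2) : ℝ) *
      (((((k + 1) / 2 : ℕ) : ℝ) * (((k + 2) / 2 : ℕ) : ℝ)) / ((k : ℝ) + 1) ^ 2)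
        ^ ((k : ℝ) / 2) = optWeight k := by
  unfold optWeight binWeight
  obtain ⟨m, rfl | rfl⟩ := k.even_or_odd'
  · rw [show (2 * m + 1) / 2 = m by omega, show (2 * m + 2) / 2 = m + 1 by omega,
      show 2 * m / 2 = m by omega, show 2 * m - m = m by omega]
    rw [show ((2 * m : ℕ) : ℝ) / 2 = (m : ℕ) by push_cast; ring, Real.rpow_natCast, mul_assoc,
      ← mul_pow]
    congr 2
    push_cast
    field_simp
    ring
  · rw [show (2 * m + 1 + 1) / 2 = m + 1 by omega, show (2 * m + 1 + 2) / 2 = m + 1 by omega,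
      show (2 * m + 1) / 2 = m by omega, show 2 * m + 1 - (m + 1) = m by omega]
    have e1 : (((m + 1 : ℕ) : ℝ) * ((m + 1 : ℕ) : ℝ)) / (((2 * m + 1 : ℕ) : ℝ) + 1) ^ 2
        = (1 / 2) ^ (2 : ℝ) := by
      rw [Real.rpow_two]
      push_cast
      field_simp
      ring
    have e2 : ((m + 1 : ℕ) : ℝ) / (((2 * m + 1 : ℕ) : ℝ) + 1) = 1 / 2 := by
      push_cast
      field_simp
      ring
    rw [e1, e2, ← Real.rpow_mul (by norm_num),
      show (2 : ℝ) * (((2 * m + 1 : ℕ) : ℝ) / 2) = (2 * m + 1 : ℕ) by ring, Real.rpow_natCast,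
      Nat.choose_symm_half m]
    ring

/-! ### The lower bound -/

lemma lower_bound_pos {k : ℕ} (hk : 1 ≤ k) (f : Fin k → Fin 2 → ℝ) (hf : ∀ i v, 0 < f i v) :
    ∃ n ∈ Finset.range (k + 1),
      optWeight k * ∏ i, (f i 0 + f i 1) ≤ conv1 k f (n : ℕ) := by
  obtain ⟨a, hpos, hlc, hc⟩ := exists_logConcave k f hf
  obtain ⟨n, hn, hmax⟩ := Finset.exists_max_image (Finset.range (k + 1))
    (fun j : ℕ => conv1 k f j) ⟨0, by simp⟩
  have hnk : n ≤ k := by simpa [Nat.lt_succ_iff] using hn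
  refine ⟨n, hn, ?_⟩
  obtain ⟨p, hp1, hp2, hp⟩ := exists_binWeight_le hk hnk hpos hlc (fun j hj => by
    rw [← hc, ← hc]
    exact hmax j (by simpa [Nat.lt_succ_iff] using hj))
  have hw : optWeight k ≤ binWeight k n p := by
    refine binWeight_between (optWeight_nonneg k) (by positivity) hp1 hp2 ?_
      (optWeight_le_left hk hnk) (optWeight_le_right hk hnk)
    rw [div_le_one (by positivity)]
    have : (n : ℝ) ≤ k := by exact_mod_cast hnk
    linarith
  simp only [← hc] at hp
  rw [sum_conv1] at hp
  refine le_trans ?_ hp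
  gcongr
  exact Finset.prod_nonneg fun i _ => (add_pos (hf i 0) (hf i 1)).le

lemma lower_bound {k : ℕ} (hk : 1 ≤ k) (f : Fin k → Fin 2 → ℝ) (hf : ∀ i v, 0 ≤ f i v) :
    ∃ n : ℤ, optWeight k * ∏ i, (f i 0 + f i 1) ≤ conv1 k f n := by
  by_contra! h
  have cont : ∀ n : ℤ, Continuous fun ε : ℝ => conv1 k (fun i v => f i v + ε) n := by
    intro n
    unfold conv1
    fun_prop
  have ev : ∀ᶠ ε : ℝ in nhdsWithin 0 (Set.Ioi 0), ∀ n ∈ Finset.range (k + 1),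
      conv1 k (fun i v => f i v + ε) (n : ℕ)
        < optWeight k * ∏ i, ((f i 0 + ε) + (f i 1 + ε)) := by
    refine (Filter.eventually_all_finset _).2 fun n _ => ?_
    refine Filter.Eventually.filter_mono nhdsWithin_le_nhds ?_
    refine (cont n).continuousAt.eventually_lt (Continuous.continuousAt (by fun_prop)) ?_
    simpa using h n
  obtain ⟨ε, hε, hpos⟩ := (ev.and self_mem_nhdsWithin).exists
  obtain ⟨n, hn, hle⟩ := lower_bound_pos hk (fun i v => f i v + ε)
    (fun i v => add_pos_of_nonneg_of_pos (hf i v) hpos)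
  exact absurd hle (not_le.2 (hε n hn))

/-! ### Optimality -/

lemma conv1_const (k : ℕ) (p : ℝ) (n : ℕ) :
    conv1 k (fun _ => ![1 - p, p]) n = binWeight k n p := by
  unfold binWeight
  induction k generalizing n with
  | zero =>
    rw [conv1_zero]
    rcases n with _ | n
    · simp
    · simp
      omega
  | succ k ih =>
    rw [conv1_succ, ih]
    rcases n with _ | i
    · rw [conv1_neg _ _ _ (by simp)]
      simp [pow_succ, mul_comm]
    · have e : ((i + 1 : ℕ) : ℤ) - 1 = i := by push_cast; ring
      rw [e, ih, Nat.choose_succ_succ, Nat.add_sub_add_right]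
      simp only [Matrix.cons_val_zero, Matrix.cons_val_one]
      push_cast
      rcases Nat.lt_or_ge i k with h | h
      · rw [show k - i = k - (i + 1) + 1 by omega]
        ring
      · rw [Nat.choose_eq_zero_of_lt (by omega : k < i + 1)]
        push_cast
        ring

/-- The ratio of consecutive weights of a binomial law, in multiplied-out form. -/
lemma binWeight_succ {k j : ℕ} (hj : j + 1 ≤ k) (p : ℝ) :
    binWeight k (j + 1) p * ((j + 1) * (1 - p)) = binWeight k j p * ((k - j) * p) := by
  unfold binWeight
  have c : (k.choose (j + 1) : ℝ) * (j + 1) = k.choose j * (k - j) := by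
    have := Nat.choose_succ_right_eq k j
    rw [← Nat.cast_sub (by omega)]
    exact_mod_cast this
  rw [show k - j = k - (j + 1) + 1 by omega, pow_succ, pow_succ]
  linear_combination (p ^ j * p * (1 - p) ^ (k - (j + 1)) * (1 - p)) * c

lemma binWeight_le_mode {k m : ℕ} (hm0 : 1 ≤ m) (hm : m ≤ k) {j : ℕ} (hj : j ≤ k) :
    binWeight k j (m / (k + 1)) ≤ binWeight k m (m / (k + 1)) := by
  set p : ℝ := m / (k + 1) with hp
  have hpk : p * (k + 1) = m := by
    rw [hp]
    field_simp
  have hmk : (m : ℝ) ≤ k := by exact_mod_cast hm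
  have p0 : 0 < p := by
    have : (0 : ℝ) < m := by exact_mod_cast hm0
    positivity
  have p1 : 0 < 1 - p := by
    have : p < 1 := by
      rw [hp, div_lt_one (by positivity)]
      linarith
    linarith
  have hw : ∀ j, 0 ≤ binWeight k j p := fun j => by
    unfold binWeight
    positivity
  have up : ∀ j, j + 1 ≤ m → binWeight k j p ≤ binWeight k (j + 1) p := by
    intro j h
    have s := binWeight_succ (show j + 1 ≤ k by omega) p
    have h' : (j : ℝ) + 1 ≤ m := by exact_mod_cast h
    have c : (j + 1) * (1 - p) ≤ (k - j) * p := by linarith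
    have := mul_le_mul_of_nonneg_left c (hw j)
    rw [← s] at this
    exact le_of_mul_le_mul_right this (by positivity)
  have down : ∀ j, m ≤ j → j + 1 ≤ k → binWeight k (j + 1) p ≤ binWeight k j p := by
    intro j h hk
    have s := binWeight_succ hk p
    have h' : (m : ℝ) ≤ j := by exact_mod_cast h
    have hk' : (j : ℝ) + 1 ≤ k := by exact_mod_cast hk
    have c : (k - j) * p ≤ (j + 1) * (1 - p) := by linarith
    have := mul_le_mul_of_nonneg_left c (hw j)
    rw [← s] at this
    exact le_of_mul_le_mul_right this (by positivity)
  rcases le_total m j with h | h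
  · induction j, h using Nat.le_induction with
    | base => exact le_rfl
    | succ j h ih => exact (down j h hj).trans (ih (by omega))
  · have : ∀ d j, j + d = m → binWeight k j p ≤ binWeight k m p := by
      intro d
      induction d with
      | zero =>
        intro j h
        simp at h
        rw [h]
      | succ d ih => exact fun j h => (up j (by omega)).trans (ih (j + 1) (by omega))
    exact this (m - j) j (by omega)

/-- For `k ≥ 2` and nonzero nonnegative `f₁,…,f_k : {0,1} → ℝ≥0`,
`‖f₁∗⋯∗f_k‖_∞ ≥ C(k,⌊k/2⌋)·(⌊(k+1)/2⌋⌈(k+1)/2⌉/(k+1)²)^(k/2) · ∏ᵢ (fᵢ(0)+fᵢ(1))`,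
and this constant is optimal. -/
theorem stmt7 (k : ℕ) (hk : 2 ≤ k) :
    (∀ f : Fin k → Fin 2 → ℝ, (∀ i v, 0 ≤ f i v) → (∀ i, f i ≠ 0) →
      ∃ n : ℤ,
        (k.choose (k / 2) : ℝ) *
            (((((k + 1) / 2 : ℕ) : ℝ) * (((k + 2) / 2 : ℕ) : ℝ)) / ((k : ℝ) + 1) ^ 2)
              ^ ((k : ℝ) / 2) *
          ∏ i, (f i 0 + f i 1) ≤ conv1 k f n) ∧
    (∃ g : Fin k → Fin 2 → ℝ, (∀ i v, 0 ≤ g i v) ∧ (∀ i, g i ≠ 0) ∧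
      ∀ n : ℤ,
        conv1 k g n ≤
          (k.choose (k / 2) : ℝ) *
              (((((k + 1) / 2 : ℕ) : ℝ) * (((k + 2) / 2 : ℕ) : ℝ)) / ((k : ℝ) + 1) ^ 2)
                ^ ((k : ℝ) / 2) *
            ∏ i, (g i 0 + g i 1)) := by
  rw [optWeight_eq]
  refine ⟨fun f hf _ => lower_bound (by omega) f hf, ?_⟩
  set p : ℝ := ((k + 1) / 2 : ℕ) / ((k : ℝ) + 1) with hp
  have p0 : 0 ≤ p := by positivity
  have p1 : p < 1 := by
    rw [hp, div_lt_one (by positivity)]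
    exact_mod_cast (by omega : (k + 1) / 2 < k + 1)
  refine ⟨fun _ => ![1 - p, p], ?_, ?_, ?_⟩
  · intro i v
    fin_cases v
    · simpa using p1.le
    · simpa using p0
  · intro i h
    have := congrFun h 0
    simp at this
    linarith
  · intro n
    simp only [Matrix.cons_val_zero, Matrix.cons_val_one, sub_add_cancel, Finset.prod_const_one,
      mul_one]
    rcases lt_or_ge n 0 with h | h
    · rw [conv1_neg _ _ _ h]
      exact optWeight_nonneg k
    rcases lt_or_ge (k : ℤ) n with h' | h'
    · rw [conv1_large _ _ _ h']
      exact optWeight_nonneg k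
    lift n to ℕ using h
    rw [conv1_const]
    exact binWeight_le_mode (by omega) (by omega) (by omega)
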